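/- Let p > 1, a, b > 0 and λ > 0. Let φ ∈ C¹[0,1] satisfy φ(0) = φ(1) = 0, φ > 0 on (0,1), φ(t) = φ(1−t) for all t, and suppose φ is a weak solution of −(|φ'|^{p−2} φ')' = λ |φ|^{p−2} φ on (0,1). Set t₀ = a/(a+b) and define u : [0,1] → ℝ by u(t) = φ(t/(2t₀)) for t ∈ [0, t₀] and u(t) = φ((t + 1 − 2t₀)/(2(1 − t₀))) for t ∈ [t₀, 1]. Then u ∈ C¹[0,1], u(0) = u(1) = 0, u > 0 on (0,1), and u is a weak solution of −Δ^{a,b}_p u = ((a+b)/2)^p λ |u|^{p−2} u on (0,1). -/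

import Mathlib

open Set

/-- `u` is C¹ on `[α, γ]` with derivative `u'` there. -/
def C1On (α γ : ℝ) (u u' : ℝ → ℝ) : Prop :=
  (∀ t ∈ Set.Icc α γ, HasDerivWithinAt u (u' t) (Set.Icc α γ) t) ∧
  ContinuousOn u' (Set.Icc α γ)

/-- Admissible functions on `[0, L]`: C¹ with zero boundary values. -/
def Adm (L : ℝ) (u u' : ℝ → ℝ) : Prop :=
  C1On 0 L u u' ∧ u 0 = 0 ∧ u L = 0

/-- The asymmetric energy integrand `a^p (s⁺)^p + b^p (s⁻)^p`. -/
noncomputable def asymE (p a b s : ℝ) : ℝ :=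
  a ^ p * (max s 0) ^ p + b ^ p * (max (-s) 0) ^ p

/-- The asymmetric flux `a^p (s⁺)^(p-1) - b^p (s⁻)^(p-1)`. -/
noncomputable def asymFlux (p a b s : ℝ) : ℝ :=
  a ^ p * (max s 0) ^ (p - 1) - b ^ p * (max (-s) 0) ^ (p - 1)

/-- The first Dirichlet eigenvalue `λ^{a,b}_{1,p}(0,L)`, as the infimum of the
asymmetric energy over normalized admissible functions. -/
noncomputable def lam1 (p a b L : ℝ) : ℝ :=
  sInf { E : ℝ | ∃ u u' : ℝ → ℝ, Adm L u u' ∧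
    (∫ t in (0:ℝ)..L, |u t| ^ p) = 1 ∧
    E = ∫ t in (0:ℝ)..L, asymE p a b (u' t) }

/-- `u` (a C¹ function on `[0,L]` with derivative `u'` and zero boundary values)
is a weak solution of `-Δ^{a,b}_p u = g` on `(0,L)`. -/
def IsWeakSol (p a b L : ℝ) (u u' g : ℝ → ℝ) : Prop :=
  Adm L u u' ∧
  ∀ φ φ' : ℝ → ℝ, Adm L φ φ' →
    (∫ t in (0:ℝ)..L, asymFlux p a b (u' t) * φ' t) =
      ∫ t in (0:ℝ)..L, g t * φ t

/-- The gluing of `φ : [0,1] → ℝ` at scale `t0`: the two monotone halves of `φ`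
are stretched to `[0,t0]` and `[t0,1]` respectively. -/
noncomputable def glue (φ : ℝ → ℝ) (t0 : ℝ) : ℝ → ℝ := fun t =>
  if t ≤ t0 then φ (t / (2 * t0)) else φ ((t + 1 - 2 * t0) / (2 * (1 - t0)))


lemma h_prim (f : ℝ → ℝ) (hf : ContinuousOn f (Icc (0:ℝ) 1)) :
    ∃ P : ℝ → ℝ, (∀ t ∈ Icc (0:ℝ) 1, HasDerivWithinAt P (f t) (Icc (0:ℝ) 1) t) ∧ P 0 = 0 := by
  have hc : Continuous (IccExtend (zero_le_one (α := ℝ)) ((Icc (0:ℝ) 1).domRestrict f)) :=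
    (continuousOn_iff_continuous_domRestrict.1 hf).Icc_extend'
  refine ⟨fun t => ∫ x in (0:ℝ)..t,
    IccExtend (zero_le_one (α := ℝ)) ((Icc (0:ℝ) 1).domRestrict f) x, ?_, by simp⟩
  intro t ht
  have := (hc.integral_hasStrictDerivAt 0 t).hasDerivAt.hasDerivWithinAt (s := Icc (0:ℝ) 1)
  rwa [IccExtend_of_mem _ _ ht] at this

lemma h_ftc (f f' : ℝ → ℝ)
    (hd : ∀ t ∈ Icc (0:ℝ) 1, HasDerivWithinAt f (f' t) (Icc (0:ℝ) 1) t)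
    (hc : ContinuousOn f' (Icc (0:ℝ) 1)) : ∫ t in (0:ℝ)..1, f' t = f 1 - f 0 := by
  apply intervalIntegral.integral_eq_sub_of_hasDerivAt_of_le zero_le_one
  · exact fun t ht => (hd t ht).continuousWithinAt
  · exact fun t ht => (hd t (Ioo_subset_Icc_self ht)).hasDerivAt (Icc_mem_nhds ht.1 ht.2)
  · exact hc.intervalIntegrable_of_Icc zero_le_one

/-- Integration by parts with vanishing boundary term. -/
lemma h_parts (f f' w w' : ℝ → ℝ)
    (hd : ∀ t ∈ Icc (0:ℝ) 1, HasDerivWithinAt f (f' t) (Icc (0:ℝ) 1) t)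
    (hc : ContinuousOn f' (Icc (0:ℝ) 1)) (hw : Adm 1 w w') :
    ∫ t in (0:ℝ)..1, f t * w' t = - ∫ t in (0:ℝ)..1, f' t * w t := by
  obtain ⟨⟨hw1, hw2⟩, hw0, hwL⟩ := hw
  have cf : ContinuousOn f (Icc (0:ℝ) 1) := fun t ht => (hd t ht).continuousWithinAt
  have cw : ContinuousOn w (Icc (0:ℝ) 1) := fun t ht => (hw1 t ht).continuousWithinAt
  have h := h_ftc (fun t => f t * w t) (fun t => f' t * w t + f t * w' t)
    (fun t ht => (hd t ht).mul (hw1 t ht)) ((hc.mul cw).add (cf.mul hw2))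
  have i1 : IntervalIntegrable (fun t => f' t * w t) MeasureTheory.volume 0 1 :=
    (hc.mul cw).intervalIntegrable_of_Icc zero_le_one
  have i2 : IntervalIntegrable (fun t => f t * w' t) MeasureTheory.volume 0 1 :=
    (cf.mul hw2).intervalIntegrable_of_Icc zero_le_one
  rw [intervalIntegral.integral_add i1 i2] at h
  simp only [hw0, hwL] at h
  linarith

/-- du Bois-Reymond: a continuous function with weak derivative `-g` has derivative `-g`. -/
lemma h_dbr (F g : ℝ → ℝ) (hF : ContinuousOn F (Icc (0:ℝ) 1)) (hg : ContinuousOn g (Icc (0:ℝ) 1))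
    (h : ∀ w w' : ℝ → ℝ, Adm 1 w w' →
      (∫ t in (0:ℝ)..1, F t * w' t) = ∫ t in (0:ℝ)..1, g t * w t) :
    ∀ t ∈ Icc (0:ℝ) 1, HasDerivWithinAt F (- g t) (Icc (0:ℝ) 1) t := by
  obtain ⟨G, hG, hG0⟩ := h_prim g hg
  have cG : ContinuousOn G (Icc (0:ℝ) 1) := fun t ht => (hG t ht).continuousWithinAt
  obtain ⟨H, hH, hH0⟩ := h_prim (fun t => F t + G t) (hF.add cG)
  have hw : Adm 1 (fun t => H t - H 1 * t) (fun t => F t + G t - H 1) := by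
    refine ⟨⟨fun t ht => ?_, (hF.add cG).sub continuousOn_const⟩, by simp [hH0], by simp⟩
    have h1 := (hH t ht).sub ((hasDerivWithinAt_id t (Icc (0:ℝ) 1)).const_mul (H 1))
    rw [mul_one] at h1
    exact h1
  have e1 := h _ _ hw
  have e2 := h_parts G g _ _ hG hg hw
  have cK : ContinuousOn (fun t => F t + G t - H 1) (Icc (0:ℝ) 1) :=
    (hF.add cG).sub continuousOn_const
  have e3 : ∫ t in (0:ℝ)..1, (F t + G t - H 1) = 0 := by
    rw [h_ftc _ _ hw.1.1 hw.1.2]; simp [hH0]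
  have e4 : ∫ t in (0:ℝ)..1, (F t + G t - H 1) ^ 2 = 0 := by
    have : ∀ t, (F t + G t - H 1) ^ 2 = (F t * (F t + G t - H 1) + G t * (F t + G t - H 1))
        - H 1 * (F t + G t - H 1) := fun t => by ring
    simp only [this]
    rw [intervalIntegral.integral_sub, intervalIntegral.integral_add, e1, e2,
      intervalIntegral.integral_const_mul, e3]
    · simp
    · exact (hF.mul cK).intervalIntegrable_of_Icc zero_le_one
    · exact (cG.mul cK).intervalIntegrable_of_Icc zero_le_one
    · exact ((hF.mul cK).add (cG.mul cK)).intervalIntegrable_of_Icc zero_le_one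
    · exact (continuousOn_const.mul cK).intervalIntegrable_of_Icc zero_le_one
  have e5 : ∀ t ∈ Icc (0:ℝ) 1, F t = H 1 - G t := by
    by_contra! hne
    obtain ⟨t, ht, hne⟩ := hne
    have : 0 < ∫ t in (0:ℝ)..1, (F t + G t - H 1) ^ 2 := by
      apply intervalIntegral.integral_pos zero_lt_one (cK.pow 2) (fun _ _ => sq_nonneg _)
      refine ⟨t, ht, ?_⟩
      have : F t + G t - H 1 ≠ 0 := fun h0 => hne (by linarith)
      exact sq_pos_iff.2 this
    linarith
  intro t ht
  refine HasDerivWithinAt.congr ?_ e5 (e5 t ht)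
  simpa using (hG t ht).const_sub (H 1)

lemma h_glue (t0 : ℝ) (h0 : 0 < t0) (h1 : t0 < 1) (f1 f2 d1 d2 : ℝ → ℝ)
    (hf1 : ∀ t ∈ Icc 0 t0, HasDerivWithinAt f1 (d1 t) (Icc 0 t0) t)
    (hf2 : ∀ t ∈ Icc t0 1, HasDerivWithinAt f2 (d2 t) (Icc t0 1) t)
    (hf : f1 t0 = f2 t0) (hd : d1 t0 = d2 t0) :
    ∀ t ∈ Icc (0:ℝ) 1, HasDerivWithinAt (fun t => if t ≤ t0 then f1 t else f2 t)
      (if t ≤ t0 then d1 t else d2 t) (Icc 0 1) t := by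
  intro t ht
  have E1 : ∀ x ∈ Icc 0 t0, (if x ≤ t0 then f1 x else f2 x) = f1 x := fun x hx => by simp [hx.2]
  have E2 : ∀ x ∈ Icc t0 1, (if x ≤ t0 then f1 x else f2 x) = f2 x := fun x hx => by
    split_ifs with h
    · rw [le_antisymm h hx.1, hf]
    · rfl
  rw [← Icc_union_Icc_eq_Icc h0.le h1.le]
  apply HasDerivWithinAt.union
  · by_cases h : t ≤ t0
    · have := (hf1 t ⟨ht.1, h⟩).congr E1 (E1 t ⟨ht.1, h⟩)
      simpa [h] using this
    · apply HasFDerivWithinAt.of_notMem_closure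
      rw [closure_Icc]; exact fun hx => h hx.2
  · by_cases h : t0 ≤ t
    · have := (hf2 t ⟨h, ht.2⟩).congr E2 (E2 t ⟨h, ht.2⟩)
      have e : (if t ≤ t0 then d1 t else d2 t) = d2 t := by
        split_ifs with h'
        · rw [le_antisymm h' h, hd]
        · rfl
      rwa [e]
    · apply HasFDerivWithinAt.of_notMem_closure
      rw [closure_Icc]; exact fun hx => h hx.1

lemma h_glue_cont (t0 : ℝ) (h0 : 0 < t0) (h1 : t0 < 1) (f1 f2 : ℝ → ℝ)
    (hf1 : ContinuousOn f1 (Icc 0 t0)) (hf2 : ContinuousOn f2 (Icc t0 1))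
    (hf : f1 t0 = f2 t0) :
    ContinuousOn (fun t => if t ≤ t0 then f1 t else f2 t) (Icc 0 1) := by
  have E1 : ∀ x ∈ Icc 0 t0, (if x ≤ t0 then f1 x else f2 x) = f1 x := fun x hx => by simp [hx.2]
  have E2 : ∀ x ∈ Icc t0 1, (if x ≤ t0 then f1 x else f2 x) = f2 x := fun x hx => by
    split_ifs with h
    · rw [le_antisymm h hx.1, hf]
    · rfl
  rw [← Icc_union_Icc_eq_Icc h0.le h1.le]
  exact (hf1.congr E1).union_of_isClosed (hf2.congr E2) isClosed_Icc isClosed_Icc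

lemma h_comp (f f' l : ℝ → ℝ) (m : ℝ) (s : Set ℝ)
    (hf : ∀ t ∈ Icc (0:ℝ) 1, HasDerivWithinAt f (f' t) (Icc (0:ℝ) 1) t)
    (hl : ∀ t, HasDerivAt l m t) (hs : MapsTo l s (Icc 0 1)) :
    ∀ t ∈ s, HasDerivWithinAt (fun t => f (l t)) (m * f' (l t)) s t := by
  intro t ht
  have := (hf (l t) (hs ht)).comp t (hl t).hasDerivWithinAt hs
  rwa [mul_comm] at this

lemma h_flux_cont (p a b : ℝ) (hp : 1 < p) : Continuous (asymFlux p a b) := by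
  unfold asymFlux
  have h : 0 ≤ p - 1 := by linarith
  exact (continuous_const.mul ((continuous_id.max continuous_const).rpow_const
    (fun _ => Or.inr h))).sub (continuous_const.mul
      ((continuous_neg.max continuous_const).rpow_const (fun _ => Or.inr h)))

lemma h_flux_pos (p a b c s : ℝ) (hp : 1 < p) (ha : 0 < a) (hc : 0 < c)
    (hs : 0 ≤ s) : asymFlux p a b ((c / a) * s) = a * c ^ (p - 1) * asymFlux p 1 1 s := by
  have h : p - 1 ≠ 0 := by linarith
  have hcs : 0 ≤ c / a * s := by positivity
  unfold asymFlux
  rw [max_eq_left hcs, max_eq_left hs, max_eq_right (by linarith : -(c / a * s) ≤ 0),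
    max_eq_right (by linarith : -s ≤ 0), Real.zero_rpow h, Real.mul_rpow (by positivity) hs,
    Real.div_rpow hc.le ha.le, Real.one_rpow]
  have : a ^ p = a * a ^ (p - 1) := by
    rw [Real.rpow_sub_one ha.ne']; field_simp
  rw [this]
  have : a ^ (p - 1) ≠ 0 := by positivity
  field_simp
  ring

lemma h_flux_neg_arg (p a b s : ℝ) : asymFlux p a b (-s) = - asymFlux p b a s := by
  unfold asymFlux; rw [neg_neg]; ring

lemma h_flux_neg (p a b c s : ℝ) (hp : 1 < p) (hb : 0 < b) (hc : 0 < c)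
    (hs : s ≤ 0) : asymFlux p a b ((c / b) * s) = b * c ^ (p - 1) * asymFlux p 1 1 s := by
  have := h_flux_pos p b a c (-s) hp hb hc (by linarith)
  rw [mul_neg, h_flux_neg_arg, h_flux_neg_arg] at this
  linarith

lemma h_flux_sign (p s : ℝ) (hp : 1 < p) (hs : s < 0) : asymFlux p 1 1 s < 0 := by
  have h : p - 1 ≠ 0 := by linarith
  unfold asymFlux
  rw [max_eq_right hs.le, Real.zero_rpow h, max_eq_left (by linarith)]
  have : 0 < (-s) ^ (p - 1) := Real.rpow_pos_of_pos (by linarith) _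
  simpa using this

lemma h_flux_zero (p a b : ℝ) (hp : 1 < p) : asymFlux p a b 0 = 0 := by
  have h : p - 1 ≠ 0 := by linarith
  simp [asymFlux, Real.zero_rpow h]

lemma h_src_cont (p : ℝ) (hp : 1 < p) (φ : ℝ → ℝ) (s : Set ℝ) (hc : ContinuousOn φ s)
    (h0 : ∀ t ∈ s, 0 ≤ φ t) (lam : ℝ) :
    ContinuousOn (fun t => lam * |φ t| ^ (p - 2) * φ t) s := by
  have : ContinuousOn (fun t => lam * (φ t) ^ (p - 1)) s :=
    continuousOn_const.mul (hc.rpow_const fun t _ => Or.inr (by linarith))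
  refine this.congr fun t ht => ?_
  rcases (h0 t ht).eq_or_lt with h | h
  · simp [← h, Real.zero_rpow (show p - 1 ≠ 0 by linarith)]
  · simp only
    rw [abs_of_pos h, mul_assoc, ← Real.rpow_add_one h.ne']
    ring_nf

theorem stmt6 (p a b lam : ℝ) (hp : 1 < p) (ha : 0 < a) (hb : 0 < b) (hlam : 0 < lam)
    (φ φ' : ℝ → ℝ) (hφ : Adm 1 φ φ')
    (hpos : ∀ t ∈ Set.Ioo (0:ℝ) 1, 0 < φ t)
    (hsym : ∀ t, φ t = φ (1 - t))
    (hsol : IsWeakSol p 1 1 1 φ φ' (fun t => lam * |φ t| ^ (p - 2) * φ t)) :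
    ∃ u' : ℝ → ℝ,
      Adm 1 (glue φ (a / (a + b))) u' ∧
      (∀ t ∈ Set.Ioo (0:ℝ) 1, 0 < glue φ (a / (a + b)) t) ∧
      IsWeakSol p a b 1 (glue φ (a / (a + b))) u'
        (fun t => ((a + b) / 2) ^ p * lam * |glue φ (a / (a + b)) t| ^ (p - 2)
          * glue φ (a / (a + b)) t) := by
  obtain ⟨⟨hd, hc⟩, hz0, hz1⟩ := hφ
  have cφ : ContinuousOn φ (Icc (0:ℝ) 1) := fun t ht => (hd t ht).continuousWithinAt
  have hnn : ∀ t ∈ Icc (0:ℝ) 1, 0 ≤ φ t := by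
    intro t ht
    rcases ht.1.eq_or_lt with h | h
    · rw [← h, hz0]
    rcases ht.2.eq_or_lt with h' | h'
    · rw [h', hz1]
    exact (hpos t ⟨h, h'⟩).le
  set g : ℝ → ℝ := fun t => lam * |φ t| ^ (p - 2) * φ t with hg
  have cg : ContinuousOn g (Icc (0:ℝ) 1) := h_src_cont p hp φ _ cφ hnn lam
  have gnn : ∀ t ∈ Icc (0:ℝ) 1, 0 ≤ g t := fun t ht => by
    have := hnn t ht
    simp only [hg]; positivity
  set F : ℝ → ℝ := fun t => asymFlux p 1 1 (φ' t) with hF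
  have cF : ContinuousOn F (Icc (0:ℝ) 1) := (h_flux_cont p 1 1 hp).comp_continuousOn hc
  have dF := h_dbr F g cF cg hsol.2
  have anti : AntitoneOn F (Icc (0:ℝ) 1) := by
    apply antitoneOn_of_hasDerivWithinAt_nonpos (convex_Icc 0 1) cF (f' := fun t => - g t)
    · intro t ht
      exact (dF t (interior_subset ht)).mono interior_subset
    · intro t ht
      have := gnn t (interior_subset ht)
      linarith
  have hhalf : (1/2 : ℝ) ∈ Icc (0:ℝ) 1 := by constructor <;> norm_num
  have hmid : φ' (1/2) = 0 := by
    have h1 : HasDerivAt φ (φ' (1/2)) (1/2) :=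
      (hd _ hhalf).hasDerivAt (Icc_mem_nhds (by norm_num) (by norm_num))
    have h2 : HasDerivAt (fun t => φ (1 - t)) (- φ' (1/2)) (1/2) := by
      apply HasDerivAt.comp_const_sub
      norm_num at h1 ⊢
      exact h1
    have h3 : (fun t => φ (1 - t)) = φ := funext fun t => (hsym t).symm
    rw [h3] at h2
    have := h1.unique h2
    linarith
  have Fmid : F (1/2) = 0 := by simp only [hF]; rw [hmid, h_flux_zero p 1 1 hp]
  have sgn1 : ∀ t ∈ Icc (0:ℝ) 1, t ≤ 1/2 → 0 ≤ φ' t := by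
    intro t ht h
    by_contra! hneg
    have h1 := h_flux_sign p _ hp hneg
    have h2 := anti ht hhalf h
    rw [Fmid] at h2
    simp only [hF] at h2
    linarith
  have sgn2 : ∀ t ∈ Icc (0:ℝ) 1, 1/2 ≤ t → φ' t ≤ 0 := by
    intro t ht h
    by_contra! hneg
    have h1 := h_flux_sign p (-φ' t) hp (by linarith)
    rw [h_flux_neg_arg] at h1
    have h2 := anti hhalf ht h
    rw [Fmid] at h2
    simp only [hF] at h2
    linarith
  set t0 : ℝ := a / (a + b) with ht0
  set c : ℝ := (a + b) / 2 with hcdef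
  have cpos : 0 < c := by positivity
  have h0 : 0 < t0 := by positivity
  have e1' : 1 - t0 = b / (a + b) := by rw [ht0]; field_simp; ring
  have h1 : t0 < 1 := by
    have : 0 < b / (a + b) := by positivity
    linarith
  have h1' : 0 < 1 - t0 := by linarith
  have m1 : 1 / (2 * t0) = c / a := by rw [ht0, hcdef]; field_simp
  have m2 : 1 / (2 * (1 - t0)) = c / b := by rw [e1', hcdef]; field_simp
  set l1 : ℝ → ℝ := fun t => t / (2 * t0) with hl1
  set l2 : ℝ → ℝ := fun t => (t + 1 - 2 * t0) / (2 * (1 - t0)) with hl2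
  have dl1 : ∀ t, HasDerivAt l1 (c / a) t := fun t => by
    rw [← m1]; exact (hasDerivAt_id t).div_const _
  have dl2 : ∀ t, HasDerivAt l2 (c / b) t := fun t => by
    rw [← m2]; exact (((hasDerivAt_id t).add_const 1).sub_const _).div_const _
  have r1 : ∀ t ∈ Icc 0 t0, l1 t ∈ Icc (0:ℝ) (1/2) := by
    intro t ht
    refine ⟨div_nonneg ht.1 (by linarith), ?_⟩
    simp only [hl1]
    rw [div_le_iff₀ (by linarith)]; linarith [ht.2]
  have r2 : ∀ t ∈ Icc t0 1, l2 t ∈ Icc (1/2:ℝ) 1 := by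
    intro t ht
    simp only [hl2]
    constructor
    · rw [le_div_iff₀ (by linarith)]; linarith [ht.1]
    · rw [div_le_iff₀ (by linarith)]; linarith [ht.2]
  have s1 : MapsTo l1 (Icc 0 t0) (Icc 0 1) := fun t ht =>
    ⟨(r1 t ht).1, (r1 t ht).2.trans (by norm_num)⟩
  have s2 : MapsTo l2 (Icc t0 1) (Icc 0 1) := fun t ht =>
    ⟨le_trans (by norm_num) (r2 t ht).1, (r2 t ht).2⟩
  have v1 : l1 t0 = 1/2 := by simp only [hl1]; field_simp
  have v2 : l2 t0 = 1/2 := by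
    simp only [hl2]; rw [div_eq_div_iff (by linarith) (by norm_num)]; ring
  have cl1 : Continuous l1 := continuous_iff_continuousAt.2 fun t => (dl1 t).continuousAt
  have cl2 : Continuous l2 := continuous_iff_continuousAt.2 fun t => (dl2 t).continuousAt
  have hglue : glue φ t0 = fun t => if t ≤ t0 then φ (l1 t) else φ (l2 t) := rfl
  set u' : ℝ → ℝ := fun t => if t ≤ t0 then (c / a) * φ' (l1 t) else (c / b) * φ' (l2 t) with hu'
  have hadm : Adm 1 (glue φ t0) u' := by
    refine ⟨⟨?_, ?_⟩, ?_, ?_⟩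
    · rw [hglue]
      exact h_glue t0 h0 h1 _ _ (fun t => (c / a) * φ' (l1 t)) (fun t => (c / b) * φ' (l2 t))
        (h_comp φ φ' l1 _ _ hd dl1 s1) (h_comp φ φ' l2 _ _ hd dl2 s2)
        (by rw [v1, v2]) (by simp only [v1, v2, hmid, mul_zero])
    · apply h_glue_cont t0 h0 h1
      · exact continuousOn_const.mul (hc.comp cl1.continuousOn s1)
      · exact continuousOn_const.mul (hc.comp cl2.continuousOn s2)
      · simp only [v1, v2, hmid, mul_zero]
    · simp only [hglue, if_pos h0.le, hl1, zero_div, hz0]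
    · have : l2 1 = 1 := by
        simp only [hl2]; rw [div_eq_one_iff_eq (by linarith)]; ring
      simp only [hglue, if_neg (not_le.2 h1), this, hz1]
  have hupos : ∀ t ∈ Ioo (0:ℝ) 1, 0 < glue φ t0 t := by
    intro t ht
    simp only [hglue]
    split_ifs with h
    · apply hpos
      exact ⟨div_pos ht.1 (by linarith), (r1 t ⟨ht.1.le, h⟩).2.trans_lt (by norm_num)⟩
    · apply hpos
      push Not at h
      refine ⟨lt_of_lt_of_le (by norm_num) (r2 t ⟨h.le, ht.2.le⟩).1, ?_⟩
      simp only [hl2]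
      rw [div_lt_one (by linarith)]; linarith [ht.2]
  refine ⟨u', hadm, hupos, hadm, ?_⟩
  intro w w' hw
  set k : ℝ := c ^ (p - 1) with hk
  have hcp : c ^ p = c * k := by
    rw [hk, Real.rpow_sub_one cpos.ne']; field_simp
  have hW : ∀ t ∈ Icc (0:ℝ) 1, asymFlux p a b (u' t) =
      if t ≤ t0 then a * k * F (l1 t) else b * k * F (l2 t) := by
    intro t ht
    simp only [hu']
    split_ifs with h
    · exact h_flux_pos p a b c _ hp ha cpos (sgn1 _ (s1 ⟨ht.1, h⟩) (r1 t ⟨ht.1, h⟩).2)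
    · push Not at h
      exact h_flux_neg p a b c _ hp hb cpos (sgn2 _ (s2 ⟨h.le, ht.2⟩) (r2 t ⟨h.le, ht.2⟩).1)
  have ee1 : ∀ x : ℝ, a * k * (c / a * x) = c ^ p * x := fun x => by
    rw [hcp]; field_simp
  have ee2 : ∀ x : ℝ, b * k * (c / b * x) = c ^ p * x := fun x => by
    rw [hcp]; field_simp
  have dW := h_glue t0 h0 h1 (fun t => a * k * F (l1 t)) (fun t => b * k * F (l2 t))
    (fun t => a * k * (c / a * (- g (l1 t)))) (fun t => b * k * (c / b * (- g (l2 t))))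
    (fun t ht => (h_comp F (fun t => - g t) l1 _ _ dF dl1 s1 t ht).const_mul _)
    (fun t ht => (h_comp F (fun t => - g t) l2 _ _ dF dl2 s2 t ht).const_mul _)
    (by simp only [v1, v2, Fmid, mul_zero]) (by simp only [ee1, ee2, v1, v2])
  have cW := h_glue_cont t0 h0 h1
    (fun t => a * k * (c / a * (- g (l1 t)))) (fun t => b * k * (c / b * (- g (l2 t))))
    (continuousOn_const.mul (continuousOn_const.mul (cg.comp cl1.continuousOn s1).neg))
    (continuousOn_const.mul (continuousOn_const.mul (cg.comp cl2.continuousOn s2).neg))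
    (by simp only [ee1, ee2, v1, v2])
  have key := h_parts _ _ w w' dW cW hw
  rw [← intervalIntegral.integral_neg] at key
  have eqL : ∫ t in (0:ℝ)..1, asymFlux p a b (u' t) * w' t =
      ∫ t in (0:ℝ)..1, (if t ≤ t0 then a * k * F (l1 t) else b * k * F (l2 t)) * w' t := by
    apply intervalIntegral.integral_congr
    intro t ht
    rw [uIcc_of_le zero_le_one] at ht
    simp only [hW t ht]
  rw [eqL, key]
  apply intervalIntegral.integral_congr
  intro t _
  simp only [ee1, ee2, hglue, hg]
  split_ifs <;> ring
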